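/- For all natural numbers x ≤ y, S_{7,0}(128y) − S_{7,0}(128x) = −7·(S_{7,0}(2y) − S_{7,0}(2x)); equivalently, S_{7,0}([128x,128y)) = −7·S_{7,0}([2x,2y)). -/

import Mathlib

/-- The Newman sum `S_{m,l}(x) = ∑_{0 ≤ n < x, n ≡ l (mod m)} (-1)^{σ(n)}`,
where `σ(n)` is the sum of the binary digits of `n`. -/
def newmanSum (m l x : ℕ) : ℤ :=
  ∑ n ∈ Finset.range x, if n % m = l then (-1 : ℤ) ^ ((Nat.digits 2 n).sum) else 0

/-!
Write `t(n) = (-1)^{σ(n)}`. Since `t(2n) = t(n)` and `t(2n+1) = -t(n)`, the sum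
`T_z(N) = ∑_{n < N} t(n) z^n` satisfies `T_z(2^j N) = ∏_{i < j} (1 - z^{2^i}) * T_{z^{2^j}}(N)`.
Let `p` be prime and `z^p = 1`, so that `z^{2^p} = z^2` by Fermat. Comparing `j = p` with `j = 1`,
it remains to see that `∏_{i < p} (1 - z^{2^i}) = ± p (1 - z)`. When `-2` is a primitive root
modulo `p`, the product of all `1 - z^a`, `a ≠ 0`, runs over `a = (-2)^i`, and
`1 - z^{-a} = -z^{-a} (1 - z^a)` turns the odd powers of `-2` into powers of `2` at the cost of the
sign `(-1)^{(p-1)/2}` (the factors `z^{-a}` multiply to `1`). Taking for `z` the generator of the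
group ring `ℤ[ℤ/p]`, the Newman sums are the coefficients of `T_z(N)`. The theorem is the case
`p = 7`.
-/

open Finset

section ThueMorse

/-- The Thue–Morse sequence with values `±1`: the sign `(-1)^{σ(n)}` summed by `newmanSum`. -/
def thueMorseSign (n : ℕ) : ℤ := (-1) ^ (Nat.digits 2 n).sum

lemma thueMorseSign_two_mul (n : ℕ) : thueMorseSign (2 * n) = thueMorseSign n := by
  rcases n.eq_zero_or_pos with rfl | hn
  · rfl
  · simp [thueMorseSign, Nat.digits_base_mul one_lt_two hn]

lemma thueMorseSign_two_mul_add_one (n : ℕ) : thueMorseSign (2 * n + 1) = -thueMorseSign n := by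
  rw [thueMorseSign, add_comm, Nat.digits_add 2 one_lt_two 1 n one_lt_two (.inl one_ne_zero),
    List.sum_cons, pow_add, pow_one, neg_one_mul, thueMorseSign]

variable {R : Type*} [CommRing R]

/-- The generating polynomial `∑_{n < N} (-1)^{σ(n)} z^n` of the first `N` Thue–Morse signs,
evaluated at `z`. -/
def thueMorseSum (z : R) (N : ℕ) : R := ∑ n ∈ range N, (thueMorseSign n : R) * z ^ n

lemma thueMorseSum_two_mul (z : R) (N : ℕ) :
    thueMorseSum z (2 * N) = (1 - z) * thueMorseSum (z ^ 2) N := by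
  induction N with
  | zero => simp [thueMorseSum]
  | succ N ih =>
    simp only [thueMorseSum] at ih ⊢
    rw [Nat.mul_succ, sum_range_succ, sum_range_succ, ih, sum_range_succ, thueMorseSign_two_mul,
      thueMorseSign_two_mul_add_one]
    push_cast
    ring

lemma thueMorseSum_two_pow_mul (z : R) (j N : ℕ) :
    thueMorseSum z (2 ^ j * N) =
      (∏ i ∈ range j, (1 - z ^ 2 ^ i)) * thueMorseSum (z ^ 2 ^ j) N := by
  induction j generalizing N with
  | zero => simp
  | succ j ih =>
    rw [pow_succ, mul_assoc, ih, thueMorseSum_two_mul, prod_range_succ, ← pow_mul, mul_assoc]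

lemma newmanSum_eq_coeff_thueMorseSum {m l : ℕ} (hl : l < m) (N : ℕ) :
    newmanSum m l N =
      (thueMorseSum (AddMonoidAlgebra.single (1 : ZMod m) (1 : ℤ)) N).coeff l := by
  have residue_eq_iff (n : ℕ) : (n : ZMod m) = l ↔ n % m = l := by
    rw [ZMod.natCast_eq_natCast_iff', Nat.mod_eq_of_lt hl]
  have coeff_term (n : ℕ) : ((thueMorseSign n : AddMonoidAlgebra ℤ (ZMod m)) *
      AddMonoidAlgebra.single 1 1 ^ n).coeff l = if n % m = l then thueMorseSign n else 0 := by
    rw [← zsmul_eq_mul, AddMonoidAlgebra.single_pow]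
    simp [Finsupp.single_apply, residue_eq_iff]
  rw [thueMorseSum, AddMonoidAlgebra.coeff_sum, Finsupp.finsetSum_apply]
  exact sum_congr rfl fun n _ => (coeff_term n).symm

end ThueMorse

section CyclotomicProducts

variable {R : Type*} [CommRing R]

lemma one_sub_addChar_neg {A : Type*} [AddCommGroup A] (ψ : AddChar A R) (a : A) :
    1 - ψ (-a) = -ψ (-a) * (1 - ψ a) := by
  have : ψ (-a) * ψ a = 1 := by rw [← ψ.map_add_eq_mul, neg_add_cancel, ψ.map_zero_eq_one]
  linear_combination -this

lemma prod_one_sub_addChar_neg_pow {S : Type*} [CommRing S] (ψ : AddChar S R) (g : S) (s : ℕ) :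
    ∏ i ∈ range (2 * s), (1 - ψ ((-g) ^ i)) =
      (-1) ^ s * ψ (-(g * ∑ i ∈ range s, (g ^ 2) ^ i)) *
        ∏ i ∈ range (2 * s), (1 - ψ (g ^ i)) := by
  induction s with
  | zero => simp
  | succ s ih =>
    have h_even : (-g) ^ (2 * s) = g ^ (2 * s) := (even_two_mul s).neg_pow g
    have h_odd : (-g) ^ (2 * s + 1) = -g ^ (2 * s + 1) := (odd_two_mul_add_one s).neg_pow g
    have h_sum : -(g * ∑ i ∈ range (s + 1), (g ^ 2) ^ i) =
        -(g * ∑ i ∈ range s, (g ^ 2) ^ i) + -g ^ (2 * s + 1) := by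
      rw [sum_range_succ]
      ring
    rw [Nat.mul_succ, prod_range_succ, prod_range_succ, ih, h_even, h_odd,
      one_sub_addChar_neg, h_sum, ψ.map_add_eq_mul, prod_range_succ, prod_range_succ]
    ring

lemma prod_range_eq_prod_erase {α M : Type*} [Fintype α] [DecidableEq α] [CommMonoid M] {n : ℕ}
    (hn : Fintype.card α = n + 1) (f : α → M) {e : ℕ → α} (he : Set.InjOn e (range n)) {b : α}
    (hb : ∀ i ∈ range n, e i ≠ b) :
    ∏ i ∈ range n, f (e i) = ∏ a ∈ univ.erase b, f a := by
  rw [← prod_image he]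
  congr 1
  refine eq_of_subset_of_card_le (fun a ha => ?_) ?_
  · obtain ⟨i, hi, rfl⟩ := mem_image.mp ha
    simpa using hb i hi
  · simp [card_image_of_injOn he, hn]

variable {p : ℕ} [Fact p.Prime]

open Polynomial in
lemma one_sub_mul_prod_one_sub_pow {z : R} (hz : z ^ p = 1) :
    (1 - z) * ∏ k ∈ range (p - 1), (1 - z ^ (k + 1)) = p * (1 - z) := by
  have hp : p.Prime := Fact.out
  -- `R` may have zero divisors, so the identity is proved in `ℤ[X]` modulo `X ^ p - 1`.
  let Q : ℤ[X] := ∏ k ∈ range (p - 1), (1 - X ^ (k + 1)) - (p : ℤ[X])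
  have cyclotomic_dvd : cyclotomic p ℤ ∣ Q := by
    have hζ := Complex.isPrimitiveRoot_exp p hp.ne_zero
    rw [cyclotomic_eq_minpoly hζ hp.pos]
    refine minpoly.isIntegrallyClosed_dvd (hζ.isIntegral hp.pos) ?_
    have h_prod := IsPrimitiveRoot.prod_one_sub_pow_eq_order (n := p - 1)
      (by rwa [Nat.sub_add_cancel hp.one_le])
    simp [Q, map_prod, h_prod, hp.one_le]
  have X_pow_sub_one_dvd : (X ^ p - 1 : ℤ[X]) ∣ Q * (X - 1) := by
    rw [← cyclotomic_prime_mul_X_sub_one]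
    exact mul_dvd_mul_right cyclotomic_dvd _
  have h_root : aeval z (Q * (X - 1)) = 0 :=
    zero_dvd_iff.mp (by simpa [hz] using map_dvd (aeval z) X_pow_sub_one_dvd)
  simp only [Q, map_mul, map_sub, map_prod, map_one, map_pow, map_natCast, aeval_X] at h_root
  linear_combination -h_root

lemma one_sub_mul_prod_one_sub_addChar (ψ : AddChar (ZMod p) R) :
    (1 - ψ 1) * ∏ a ∈ univ.erase 0, (1 - ψ a) = p * (1 - ψ 1) := by
  have ψ_natCast (n : ℕ) : ψ n = ψ 1 ^ n := by rw [← ψ.map_nsmul_eq_pow, nsmul_one]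
  have hz : ψ 1 ^ p = 1 := by rw [← ψ_natCast, ZMod.natCast_self, ψ.map_zero_eq_one]
  have card_eq : Fintype.card (ZMod p) = p - 1 + 1 := by
    rw [ZMod.card, Nat.sub_add_cancel NeZero.one_le]
  have h_inj : Set.InjOn (fun k : ℕ => ((k + 1 : ℕ) : ZMod p)) (range (p - 1)) := by
    intro i hi j hj hij
    rw [mem_coe, mem_range] at hi hj
    rw [ZMod.natCast_eq_natCast_iff', Nat.mod_eq_of_lt (by omega),
      Nat.mod_eq_of_lt (by omega)] at hij
    exact Nat.succ_injective hij
  have h_ne_zero : ∀ k ∈ range (p - 1), ((k + 1 : ℕ) : ZMod p) ≠ 0 := by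
    intro k hk
    rw [mem_range] at hk
    rw [Ne, ZMod.natCast_eq_zero_iff]
    exact Nat.not_dvd_of_pos_of_lt k.succ_pos (by omega)
  rw [← prod_range_eq_prod_erase card_eq (fun a => 1 - ψ a) h_inj h_ne_zero]
  simpa only [ψ_natCast] using one_sub_mul_prod_one_sub_pow hz

lemma prod_one_sub_addChar_pow_of_isPrimitiveRoot {g : ZMod p} (hg : IsPrimitiveRoot g (p - 1))
    (ψ : AddChar (ZMod p) R) :
    ∏ i ∈ range (p - 1), (1 - ψ (g ^ i)) = ∏ a ∈ univ.erase 0, (1 - ψ a) := by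
  have hp : p.Prime := Fact.out
  have card_eq : Fintype.card (ZMod p) = p - 1 + 1 := by
    rw [ZMod.card, Nat.sub_add_cancel hp.one_le]
  have h_inj : Set.InjOn (g ^ ·) (range (p - 1)) := fun i hi j hj hij =>
    hg.pow_inj (mem_range.mp hi) (mem_range.mp hj) hij
  have g_ne_zero : g ≠ 0 := hg.ne_zero (Nat.sub_ne_zero_of_lt hp.one_lt)
  exact prod_range_eq_prod_erase card_eq (fun a => 1 - ψ a) h_inj fun i _ => pow_ne_zero i g_ne_zero

lemma one_sub_mul_prod_one_sub_addChar_pow_of_isPrimitiveRoot_neg (hp₃ : 3 < p) {g : ZMod p}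
    (hg : IsPrimitiveRoot (-g) (p - 1)) (ψ : AddChar (ZMod p) R) :
    (1 - ψ 1) * ∏ i ∈ range (p - 1), (1 - ψ (g ^ i)) = (-1) ^ (p / 2) * p * (1 - ψ 1) := by
  have hp : p.Prime := Fact.out
  have two_mul_half : p - 1 = 2 * (p / 2) := by
    have := hp.odd_of_ne_two (by omega)
    grind
  have geom_sum_eq_zero : ∑ i ∈ range (p / 2), (g ^ 2) ^ i = 0 := by
    have h_sq := hg.pow (by omega) two_mul_half
    rw [neg_sq] at h_sq
    exact h_sq.geom_sum_eq_zero (by omega)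
  have h_neg := prod_one_sub_addChar_neg_pow ψ g (p / 2)
  rw [geom_sum_eq_zero, mul_zero, neg_zero, ψ.map_zero_eq_one, mul_one, ← two_mul_half,
    prod_one_sub_addChar_pow_of_isPrimitiveRoot hg] at h_neg
  have sign_sq : ((-1 : R) ^ (p / 2)) ^ 2 = 1 := by rw [← pow_mul, pow_mul', neg_one_sq, one_pow]
  have h_all := one_sub_mul_prod_one_sub_addChar ψ
  rw [h_neg] at h_all
  linear_combination (-1) ^ (p / 2) * h_all -
    (1 - ψ 1) * (∏ i ∈ range (p - 1), (1 - ψ (g ^ i))) * sign_sq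

lemma prod_one_sub_pow_pow_of_isPrimitiveRoot_neg (hp₃ : 3 < p) {g : ℕ}
    (hg : IsPrimitiveRoot (-g : ZMod p) (p - 1)) {z : R} (hz : z ^ p = 1) :
    ∏ i ∈ range p, (1 - z ^ g ^ i) = (-1) ^ (p / 2) * p * (1 - z) := by
  have hp : p.Prime := Fact.out
  let ψ := AddChar.zmodChar p hz
  have ψ_pow (i : ℕ) : ψ (g ^ i) = z ^ g ^ i := by
    rw [← Nat.cast_pow, AddChar.zmodChar_apply']
  have ψ_one : ψ 1 = z := by simpa using ψ_pow 0
  have g_ne_zero : (g : ZMod p) ≠ 0 := neg_ne_zero.mp (hg.ne_zero (by omega))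
  have z_fermat : z ^ g ^ (p - 1) = z := by
    rw [← ψ_pow, ZMod.pow_card_sub_one_eq_one g_ne_zero, ψ_one]
  have h_prod := one_sub_mul_prod_one_sub_addChar_pow_of_isPrimitiveRoot_neg hp₃ hg ψ
  simp only [ψ_pow, ψ_one] at h_prod
  calc ∏ i ∈ range p, (1 - z ^ g ^ i)
      = ∏ i ∈ range (p - 1 + 1), (1 - z ^ g ^ i) := by rw [Nat.sub_add_cancel hp.one_le]
    _ = (1 - z) * ∏ i ∈ range (p - 1), (1 - z ^ g ^ i) := by
        rw [prod_range_succ_comm, z_fermat]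
    _ = (-1) ^ (p / 2) * p * (1 - z) := h_prod

lemma three_lt_of_isPrimitiveRoot_neg_two {p : ℕ} (hp : p.Prime)
    (h : IsPrimitiveRoot (-2 : ZMod p) (p - 1)) : 3 < p := by
  by_contra! hp₃
  have := hp.two_le
  obtain rfl | rfl : p = 2 ∨ p = 3 := by grind
  · exact absurd h.pow_eq_one (by decide)
  · exact absurd (h.dvd_of_pow_eq_one 1 (by decide)) (by decide)

lemma thueMorseSum_two_pow_prime_mul (hroot : IsPrimitiveRoot (-2 : ZMod p) (p - 1)) {z : R}
    (hz : z ^ p = 1) (N : ℕ) :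
    thueMorseSum z (2 ^ p * N) = (-1) ^ (p / 2) * p * thueMorseSum z (2 * N) := by
  have hp₃ : 3 < p := three_lt_of_isPrimitiveRoot_neg_two Fact.out hroot
  have h_prod : ∏ i ∈ range p, (1 - z ^ 2 ^ i) = (-1) ^ (p / 2) * p * (1 - z) :=
    prod_one_sub_pow_pow_of_isPrimitiveRoot_neg hp₃ (mod_cast hroot) hz
  have fermat : 2 ^ p ≡ 2 [MOD p] := by simp [← ZMod.natCast_eq_natCast_iff, ZMod.pow_card]
  have z_pow_two_pow : z ^ 2 ^ p = z ^ 2 := pow_eq_pow_of_modEq fermat hz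
  rw [thueMorseSum_two_pow_mul, h_prod, z_pow_two_pow, mul_assoc, ← thueMorseSum_two_mul]

end CyclotomicProducts

theorem stmt_7_general {p l : ℕ} [Fact p.Prime] (hroot : IsPrimitiveRoot (-2 : ZMod p) (p - 1))
    (hl : l < p) (x : ℕ) :
    newmanSum p l (2 ^ p * x) = (-1) ^ (p / 2) * p * newmanSum p l (2 * x) := by
  have z_pow : AddMonoidAlgebra.single (1 : ZMod p) (1 : ℤ) ^ p = 1 := by
    simp [AddMonoidAlgebra.single_pow, AddMonoidAlgebra.one_def]
  have h_sum : thueMorseSum (AddMonoidAlgebra.single (1 : ZMod p) (1 : ℤ)) (2 ^ p * x) =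
      ((-1) ^ (p / 2) * p : ℤ) • thueMorseSum (AddMonoidAlgebra.single 1 1) (2 * x) := by
    simpa [zsmul_eq_mul] using thueMorseSum_two_pow_prime_mul hroot z_pow x
  rw [newmanSum_eq_coeff_thueMorseSum hl, newmanSum_eq_coeff_thueMorseSum hl, h_sum,
    AddMonoidAlgebra.coeff_smul, Finsupp.smul_apply, smul_eq_mul]

lemma isPrimitiveRoot_neg_two_zmod_seven : IsPrimitiveRoot (-2 : ZMod 7) 6 :=
  .mk_of_lt _ (by decide) (by decide) fun l hl₀ hl => by interval_cases l <;> decide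

theorem stmt_7 (x y : ℕ) (hxy : x ≤ y) :
    newmanSum 7 0 (128 * y) - newmanSum 7 0 (128 * x) =
      -7 * (newmanSum 7 0 (2 * y) - newmanSum 7 0 (2 * x)) := by
  have : Fact (Nat.Prime 7) := ⟨by norm_num⟩
  have scale (N : ℕ) : newmanSum 7 0 (128 * N) = -7 * newmanSum 7 0 (2 * N) := by
    simpa using stmt_7_general isPrimitiveRoot_neg_two_zmod_seven (by norm_num) N
  rw [scale, scale]
  ring
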